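/- Let α ∈ ℝ be a Liouville number. Then for every M > 0 there exist τ ∈ ℤ and ℓ ∈ ℕ with ℓ ≥ 1 such that (τ + α·ℓ)² < (√(1 + τ² + ℓ·(ℓ+1)))^{−M}. -/

import Mathlib

/-!
If `|α - a / l| < l ^ (-r)` with `1 ≤ r`, then `τ = -a` satisfies `|τ + α * l| < l ^ (1 - r)`, so
`|τ|` is at most a multiple of `l` and the weight of `(τ, l)` is comparable to `l`. Squaring, an
`α` approximable to exponent `p` defeats every lower bound of order `M < 2 * (p - 1)`; a Liouville
number is approximable to every exponent.
-/

open Filter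

/-- The weight `⟨(τ, ℓ)⟩` of the representation `(τ, ℓ)` of `𝕋 × SU(2)`, as a function of real
arguments so that integral and half-integral `ℓ` are treated alike. -/
noncomputable def repWeight (τ l : ℝ) : ℝ :=
  √(1 + τ ^ 2 + l * (l + 1))

theorem repWeight_pos (τ l : ℝ) : 0 < repWeight τ l :=
  Real.sqrt_pos.2 (by nlinarith [sq_nonneg τ, sq_nonneg (l + 1 / 2)])

theorem repWeight_le_mul {c τ l : ℝ} (hl : 1 ≤ l) (hτ : |τ| ≤ c * l) :
    repWeight τ l ≤ √(c ^ 2 + 3) * l := by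
  have hτ_sq : τ ^ 2 ≤ (c * l) ^ 2 := sq_le_sq.2 (hτ.trans (le_abs_self _))
  calc repWeight τ l ≤ √((c ^ 2 + 3) * l ^ 2) := Real.sqrt_le_sqrt (by nlinarith)
    _ = √(c ^ 2 + 3) * l := by
      rw [Real.sqrt_mul (by positivity), Real.sqrt_sq (zero_le_one.trans hl)]

theorem abs_le_of_abs_add_mul_le_one {α τ l : ℝ} (hl : 1 ≤ l) (h : |τ + α * l| ≤ 1) :
    |τ| ≤ (|α| + 1) * l :=
  calc |τ| = |(τ + α * l) - α * l| := by rw [add_sub_cancel_right]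
    _ ≤ |τ + α * l| + |α * l| := abs_sub _ _
    _ = |τ + α * l| + |α| * l := by rw [abs_mul, abs_of_nonneg (zero_le_one.trans hl)]
    _ ≤ (|α| + 1) * l := by linarith

theorem frequently_abs_int_add_mul_lt {p q α : ℝ} (h : LiouvilleWith p α) (hq : q < p - 1) :
    ∃ᶠ l : ℕ in atTop, ∃ τ : ℤ, |τ + α * l| < (l : ℝ) ^ (-q) := by
  have happrox := h.frequently_lt_rpow_neg (lt_sub_iff_add_lt.1 hq)
  refine (happrox.and_eventually (eventually_gt_atTop 0)).mono ?_
  rintro l ⟨⟨a, -, ha⟩, hl⟩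
  have hl_pos : (0 : ℝ) < l := Nat.cast_pos.2 hl
  refine ⟨-a, ?_⟩
  calc |((-a : ℤ) : ℝ) + α * l| = |(α - a / l) * l| := by
        congr 1; push_cast; field_simp; ring
    _ = |α - a / l| * l := by rw [abs_mul, abs_of_pos hl_pos]
    _ < (l : ℝ) ^ (-(q + 1)) * l := mul_lt_mul_of_pos_right ha hl_pos
    _ = (l : ℝ) ^ (-q) := by rw [← Real.rpow_add_one hl_pos.ne']; congr 1; ring

theorem eventually_rpow_neg_le_mul_rpow_neg {K s t : ℝ} (hK : 0 < K) (hst : s < t) :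
    ∀ᶠ x : ℝ in atTop, x ^ (-t) ≤ (K * x) ^ (-s) := by
  have hlarge := (tendsto_rpow_atTop (sub_pos.2 hst)).eventually_ge_atTop (K ^ s)
  filter_upwards [hlarge, eventually_gt_atTop 0] with x hx hx_pos
  have hmul : (K * x) ^ s ≤ x ^ t :=
    calc (K * x) ^ s = K ^ s * x ^ s := Real.mul_rpow hK.le hx_pos.le
      _ ≤ x ^ (t - s) * x ^ s := by gcongr
      _ = x ^ t := by rw [← Real.rpow_add hx_pos, sub_add_cancel]
  rw [Real.rpow_neg hx_pos.le, Real.rpow_neg (by positivity)]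
  exact inv_anti₀ (by positivity) hmul

theorem stmt12_general {p α M : ℝ} (hα : LiouvilleWith p α) (hM : 0 ≤ M) (hMp : M < 2 * (p - 1)) :
    ∃ᶠ l : ℕ in atTop, ∃ τ : ℤ, (τ + α * l) ^ 2 < repWeight τ l ^ (-M) := by
  obtain ⟨q, hMq, hqp⟩ : ∃ q, M / 2 < q ∧ q < p - 1 := exists_between (by linarith)
  let K := √((|α| + 1) ^ 2 + 3)
  have hscale : ∀ᶠ l : ℕ in atTop, (l : ℝ) ^ (-(2 * q)) ≤ (K * l) ^ (-M) :=
    tendsto_natCast_atTop_atTop.eventually <|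
      eventually_rpow_neg_le_mul_rpow_neg (by positivity) (by linarith)
  refine ((frequently_abs_int_add_mul_lt hα hqp).and_eventually
    (hscale.and (eventually_ge_atTop 1))).mono ?_
  rintro l ⟨⟨τ, hτ⟩, hl_scale, hl⟩
  have hl_one : (1 : ℝ) ≤ l := Nat.one_le_cast.2 hl
  have hτ_one : |τ + α * l| ≤ 1 :=
    hτ.le.trans (Real.rpow_le_one_of_one_le_of_nonpos hl_one (by linarith))
  have hweight : repWeight τ l ≤ K * l :=
    repWeight_le_mul hl_one (abs_le_of_abs_add_mul_le_one hl_one hτ_one)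
  refine ⟨τ, ?_⟩
  calc (τ + α * l) ^ 2 = |τ + α * l| ^ 2 := (sq_abs _).symm
    _ < ((l : ℝ) ^ (-q)) ^ 2 := by gcongr
    _ = (l : ℝ) ^ (-(2 * q)) := by
      rw [← Real.rpow_mul_natCast l.cast_nonneg]; congr 1; push_cast; ring
    _ ≤ (K * l) ^ (-M) := hl_scale
    _ ≤ repWeight τ l ^ (-M) :=
      Real.rpow_le_rpow_of_nonpos (repWeight_pos _ _) hweight (neg_nonpos.2 hM)

theorem stmt12 (α : ℝ) (hα : Liouville α) :
    ∀ M : ℝ, 0 < M → ∃ τ : ℤ, ∃ l : ℕ, 1 ≤ l ∧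
      (τ + α * l) ^ 2 <
        (Real.sqrt (1 + (τ : ℝ) ^ 2 + (l : ℝ) * ((l : ℝ) + 1))) ^ (-M : ℝ) := by
  intro M hM
  obtain ⟨l, hl, τ, hτ⟩ := frequently_atTop.1
    (stmt12_general (hα.liouvilleWith (M / 2 + 2)) hM.le (by linarith)) 1
  exact ⟨τ, l, hl, hτ⟩
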